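/- Let γ > 0, 1 < α < 2, p > 1, a > 0, b > 0. There exist positive constants K₁ and K₂, depending only on α, γ, p, a, b but not on T, such that: for every T > 0 and every w ∈ C¹([0,T]) with w ≢ 0 for which the function t ↦ ₀I_t^{2−α}(w(s) − w'(0)s − w(0)) belongs to AC²([0,T]) and for almost every t ∈ [0,T] one has (₀D_t^α w)(t) + a·w(t) ≥ b·(₀I_t^γ (|w|^p))(t), the inequality T·w'(0) + w(0) ≤ K₁·T^{α+γ−pγ/(p−1)} + K₂·T^{−(α+γ)/(p−1)} holds. -/

import Mathlib

/-!
Taking the fractional integral of order `σ` at the endpoint `T` is testing against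
`(T - s)^(σ - 1) / Γ(σ)`. By the semigroup law it turns `₀I^γ` into a shift of the order to `σ + γ`
and the Caputo derivative into a shift to `n = σ - α`, so no integration by parts is needed.

A single such test function sees `w(0)` and `T w'(0)` with different coefficients. Subtracting
`κ / T` times the integral of order `σ + 1`, with `κ = n (n + 2) / (n + 1)`, makes the coefficients
equal, and `κ ≤ n + 1 ≤ σ` keeps the test function nonnegative, so that the differential inequality
may be tested with it. Young's inequality absorbs the terms linear in `|w|` into the one with
`|w|^p`; integrating its remainder against powers of `T - s` produces the two powers of `T`.
-/

open MeasureTheory Filter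

/-- Riemann–Liouville fractional integral of order `σ` based at `0`:
`(₀I_t^σ f)(t) = (1/Γ(σ)) ∫₀ᵗ (t−s)^{σ−1} f(s) ds`. -/
noncomputable def rlInt (σ : ℝ) (f : ℝ → ℝ) (t : ℝ) : ℝ :=
  (1 / Real.Gamma σ) * ∫ s in (0:ℝ)..t, (t - s) ^ (σ - 1) * f s

/-- The function whose second derivative is the (left) Caputo derivative of order `α ∈ (1,2]`:
for `α < 2` it is `₀I_t^{2−α}(w(s) − w'(0)·s − w(0))`, and for `α = 2` it is `w` itself. -/
noncomputable def capKernel (α : ℝ) (w : ℝ → ℝ) : ℝ → ℝ :=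
  if α = 2 then w else rlInt (2 - α) (fun s => w s - deriv w 0 * s - w 0)

/-- Left Caputo fractional derivative of order `α ∈ (1,2]`:
`(₀D_t^α w)(t) = (d²/dt²)[ ₀I_t^{2−α}(w(s) − w'(0)s − w(0)) ](t)` (second derivative of `w` when `α = 2`). -/
noncomputable def caputoD (α : ℝ) (w : ℝ → ℝ) : ℝ → ℝ :=
  deriv (deriv (capKernel α w))

/-- `g ∈ AC²([0,T])`: `g` is differentiable on `[0,T]`, its second derivative is integrable,
and `g'` is the integral of `g''` (i.e. `g'` is absolutely continuous). -/
def AC2On (g : ℝ → ℝ) (T : ℝ) : Prop :=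
  (∀ t ∈ Set.Icc (0:ℝ) T, DifferentiableAt ℝ g t) ∧
  IntervalIntegrable (deriv (deriv g)) volume 0 T ∧
  ∀ t ∈ Set.Icc (0:ℝ) T, deriv g t = deriv g 0 + ∫ s in (0:ℝ)..t, deriv (deriv g) s

/-! ### The semigroup of fractional integrals -/

lemma rlInt_one (f : ℝ → ℝ) (t : ℝ) : rlInt 1 f t = ∫ s in (0 : ℝ)..t, f s := by
  simp [rlInt]

lemma rlInt_const_mul (σ c : ℝ) (f : ℝ → ℝ) (t : ℝ) :
    rlInt σ (fun s => c * f s) t = c * rlInt σ f t := by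
  simp only [rlInt, mul_left_comm _ c, intervalIntegral.integral_const_mul]

lemma rlInt_congr {σ t : ℝ} {f g : ℝ → ℝ} (ht : 0 ≤ t) (h : ∀ s ∈ Set.Icc 0 t, f s = g s) :
    rlInt σ f t = rlInt σ g t := by
  unfold rlInt
  congr 1
  refine intervalIntegral.integral_congr fun s hs => ?_
  rw [Set.uIcc_of_le ht] at hs
  simp only [h s hs]

lemma integral_sub_rpow {q : ℝ} (t : ℝ) (hq : -1 < q) :
    ∫ s in (0 : ℝ)..t, (t - s) ^ q = t ^ (q + 1) / (q + 1) := by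
  rw [intervalIntegral.integral_comp_sub_left (fun x : ℝ => x ^ q) t, sub_self, sub_zero,
    integral_rpow (Or.inl hq), Real.zero_rpow (by linarith), sub_zero]

lemma intervalIntegrable_sub_rpow {q : ℝ} (t : ℝ) (hq : -1 < q) :
    IntervalIntegrable (fun s : ℝ => (t - s) ^ q) volume 0 t := by
  simpa using
    ((intervalIntegral.intervalIntegrable_rpow' (a := 0) (b := t) hq).comp_sub_left t).symm

lemma rlInt_rpow {σ β t : ℝ} (hσ : 0 < σ) (hβ : -1 < β) (ht : 0 < t) :
    rlInt σ (fun s => s ^ β) t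
      = Real.Gamma (β + 1) / Real.Gamma (β + 1 + σ) * t ^ (β + σ) := by
  have hβ' : 0 < β + 1 := by linarith
  have hbeta := Complex.betaIntegral_scaled ((β + 1 : ℝ) : ℂ) (σ : ℂ) ht
  rw [Complex.betaIntegral_eq_Gamma_mul_div _ _ (by simpa using hβ') (by simpa using hσ)] at hbeta
  have hreal : ∫ s in (0 : ℝ)..t, (s : ℂ) ^ (((β + 1 : ℝ) : ℂ) - 1) * ((t : ℂ) - s) ^ ((σ : ℂ) - 1)
      = ((∫ s in (0 : ℝ)..t, (t - s) ^ (σ - 1) * s ^ β : ℝ) : ℂ) := by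
    rw [← intervalIntegral.integral_ofReal]
    refine intervalIntegral.integral_congr fun s hs => ?_
    rw [Set.uIcc_of_le ht.le] at hs
    rw [mul_comm, Complex.ofReal_mul, Complex.ofReal_cpow hs.1,
      Complex.ofReal_cpow (sub_nonneg.2 hs.2)]
    simp
  have hint : ∫ s in (0 : ℝ)..t, (t - s) ^ (σ - 1) * s ^ β
      = t ^ (β + σ) * (Real.Gamma (β + 1) * Real.Gamma σ / Real.Gamma (β + 1 + σ)) := by
    apply Complex.ofReal_injective
    rw [← hreal, hbeta, ← Complex.ofReal_add, Complex.Gamma_ofReal, Complex.Gamma_ofReal,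
      Complex.Gamma_ofReal, ← Complex.ofReal_one, ← Complex.ofReal_sub, ← Complex.ofReal_cpow ht.le,
      add_right_comm, add_sub_cancel_right]
    push_cast
    rfl
  rw [rlInt, hint]
  have := (Real.Gamma_pos_of_pos hσ).ne'
  field_simp

lemma rlInt_const_one {σ t : ℝ} (hσ : 0 < σ) (ht : 0 < t) :
    rlInt σ (fun _ => 1) t = t ^ σ / Real.Gamma (σ + 1) := by
  have h := rlInt_rpow hσ (β := 0) (by norm_num) ht
  simpa [add_comm, div_eq_inv_mul] using h

lemma rlInt_id {σ t : ℝ} (hσ : 0 < σ) (ht : 0 < t) :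
    rlInt σ (fun s => s) t = t ^ (σ + 1) / Real.Gamma (σ + 2) := by
  have h := rlInt_rpow hσ (β := 1) (by norm_num) ht
  simpa [add_comm, div_eq_inv_mul, one_add_one_eq_two] using h

/-- The kernel of the fractional integral of order `σ`: `₀I^σ f` is the convolution of `f` with
`rlKernel σ` on the half-line. -/
noncomputable def rlKernel (σ x : ℝ) : ℝ := x ^ (σ - 1) / Real.Gamma σ

lemma rlInt_eq_integral_mul_rlKernel (σ : ℝ) (f : ℝ → ℝ) (t : ℝ) :
    rlInt σ f t = ∫ s in (0 : ℝ)..t, f s * rlKernel σ (t - s) := by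
  rw [rlInt, ← intervalIntegral.integral_const_mul]
  congr 1 with s
  rw [rlKernel]
  ring

lemma integrable_indicator_rlKernel {σ : ℝ} (T : ℝ) (hσ : 0 < σ) :
    Integrable ((Set.Ioo 0 T).indicator (rlKernel σ)) :=
  (integrable_indicator_iff measurableSet_Ioo).2
    ((((intervalIntegral.intervalIntegrable_rpow' (by linarith)).div_const _).1).mono_set
      Set.Ioo_subset_Ioc_self)

lemma norm_indicator_rlKernel_le {σ T : ℝ} (hσ : 1 ≤ σ) (x : ℝ) :
    ‖(Set.Ioo 0 T).indicator (rlKernel σ) x‖ ≤ |T| ^ (σ - 1) / Real.Gamma σ := by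
  have := Real.Gamma_pos_of_pos (show 0 < σ by linarith)
  rw [norm_indicator_eq_indicator_norm]
  refine Set.indicator_apply_le' (fun hx => ?_) fun _ => by positivity
  have hx₀ := hx.1.le
  rw [rlKernel, Real.norm_of_nonneg (by positivity)]
  gcongr
  exact hx.2.le.trans (le_abs_self T)

lemma integrable_indicator_Ioo {f : ℝ → ℝ} {T : ℝ} (hT : 0 ≤ T)
    (hf : IntervalIntegrable f volume 0 T) : Integrable ((Set.Ioo 0 T).indicator f) :=
  (integrable_indicator_iff measurableSet_Ioo).2
    ((intervalIntegrable_iff_integrableOn_Ioo_of_le hT).1 hf)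

section Convolution

open scoped Convolution

lemma convolution_indicator_Ioo {f g : ℝ → ℝ} {t T : ℝ} (ht : t ∈ Set.Icc 0 T) :
    ((Set.Ioo 0 T).indicator f ⋆ (Set.Ioo 0 T).indicator g) t
      = ∫ s in (0 : ℝ)..t, f s * g (t - s) := by
  rw [intervalIntegral.integral_of_le ht.1, integral_Ioc_eq_integral_Ioo,
    ← integral_indicator measurableSet_Ioo, convolution]
  congr 1 with s
  have := ht.2
  simp only [ContinuousLinearMap.lsmul_apply, smul_eq_mul, Set.indicator, Set.mem_Ioo]
  split_ifs <;> grind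

lemma intervalIntegrable_rlInt {σ T : ℝ} {f : ℝ → ℝ} (hσ : 0 < σ) (hT : 0 ≤ T)
    (hf : IntervalIntegrable f volume 0 T) : IntervalIntegrable (rlInt σ f) volume 0 T := by
  rw [intervalIntegrable_iff_integrableOn_Icc_of_le hT]
  refine ((integrable_indicator_Ioo hT hf).integrable_convolution (.lsmul ℝ ℝ)
    (integrable_indicator_rlKernel T hσ)).integrableOn.congr_fun (fun t ht => ?_) measurableSet_Icc
  rw [convolution_indicator_Ioo ht, rlInt_eq_integral_mul_rlKernel]

lemma convolution_indicator_rlKernel {σ μ t T : ℝ} (hσ : 0 < σ) (hμ : 0 < μ)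
    (ht : t ∈ Set.Ioo 0 T) :
    ((Set.Ioo 0 T).indicator (rlKernel σ) ⋆ (Set.Ioo 0 T).indicator (rlKernel μ)) t
      = rlKernel (μ + σ) t := by
  have hΓ := (Real.Gamma_pos_of_pos hσ).ne'
  have hkernel : rlKernel σ = fun s => (Real.Gamma σ)⁻¹ * s ^ (σ - 1) := by
    ext s
    rw [rlKernel, div_eq_inv_mul]
  rw [convolution_indicator_Ioo (Set.Ioo_subset_Icc_self ht), ← rlInt_eq_integral_mul_rlKernel,
    hkernel, rlInt_const_mul, rlInt_rpow hμ (by linarith) ht.1, rlKernel, sub_add_cancel,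
    add_comm σ μ, show σ - 1 + μ = μ + σ - 1 by ring]
  field_simp

lemma integrable_convolution_rlKernel {σ μ t : ℝ} {F : ℝ → ℝ} (hσ : 0 < σ) (hμ : 1 ≤ μ)
    (hF : Integrable F) :
    Integrable (fun q : ℝ × ℝ => F q.2 • (Set.Ioo 0 t).indicator (rlKernel σ) (q.1 - q.2) •
      (Set.Ioo 0 t).indicator (rlKernel μ) (t - q.1)) (volume.prod volume) := by
  have hmeas : Measurable ((Set.Ioo 0 t).indicator (rlKernel μ)) :=
    Measurable.indicator (by unfold rlKernel; fun_prop) measurableSet_Ioo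
  simp only [← smul_assoc]
  exact (hF.convolution_integrand (.lsmul ℝ ℝ) (integrable_indicator_rlKernel t hσ)).mul_bdd
    (hmeas.comp (measurable_const.sub measurable_fst)).aestronglyMeasurable
    (ae_of_all _ fun q => norm_indicator_rlKernel_le hμ (t - q.1))

-- The outer kernel is bounded, so associativity of the convolution holds at every `t` and not only
-- almost everywhere.
lemma rlInt_rlInt {σ μ t : ℝ} {f : ℝ → ℝ} (hσ : 0 < σ) (hμ : 1 ≤ μ) (ht : 0 ≤ t)
    (hf : IntervalIntegrable f volume 0 t) : rlInt μ (rlInt σ f) t = rlInt (μ + σ) f t := by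
  have hμ₀ : 0 < μ := by linarith
  have ht' : t ∈ Set.Icc 0 t := Set.right_mem_Icc.2 ht
  have hF := integrable_indicator_Ioo ht hf
  have hkσ := integrable_indicator_rlKernel t hσ
  have hkμ := integrable_indicator_rlKernel t hμ₀
  have hassoc := convolution_assoc' (.lsmul ℝ ℝ) (.lsmul ℝ ℝ) (.lsmul ℝ ℝ) (.lsmul ℝ ℝ) smul_assoc
    (hF.ae_convolution_exists _ hkσ) (hkσ.ae_convolution_exists _ hkμ)
    (integrable_convolution_rlKernel hσ hμ hF)
  calc rlInt μ (rlInt σ f) t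
      = (((Set.Ioo 0 t).indicator f ⋆ (Set.Ioo 0 t).indicator (rlKernel σ)) ⋆
          (Set.Ioo 0 t).indicator (rlKernel μ)) t := by
        rw [rlInt_eq_integral_mul_rlKernel, ← convolution_indicator_Ioo ht']
        refine integral_congr_ae (ae_of_all _ fun s => ?_)
        by_cases hs : s ∈ Set.Ioo 0 t
        · simp only [Set.indicator_of_mem hs, rlInt_eq_integral_mul_rlKernel,
            convolution_indicator_Ioo (Set.Ioo_subset_Icc_self hs)]
        · have hs' : t - s ∉ Set.Ioo 0 t := by grind
          simp only [Set.indicator_of_notMem hs', map_zero]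
    _ = ((Set.Ioo 0 t).indicator f ⋆ ((Set.Ioo 0 t).indicator (rlKernel σ) ⋆
          (Set.Ioo 0 t).indicator (rlKernel μ))) t := hassoc
    _ = rlInt (μ + σ) f t := by
        rw [rlInt_eq_integral_mul_rlKernel, ← convolution_indicator_Ioo ht']
        refine integral_congr_ae (ae_of_all _ fun s => ?_)
        by_cases hs : s ∈ Set.Ioo 0 t
        · have hs' : t - s ∈ Set.Ioo 0 t := by grind
          simp only [Set.indicator_of_mem hs', convolution_indicator_rlKernel hσ hμ₀ hs']
        · simp only [Set.indicator_of_notMem hs, map_zero, zero_apply]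

end Convolution

/-! ### Linearity and order -/

section Order

variable {σ t : ℝ} {f g : ℝ → ℝ}

lemma intervalIntegrable_sub_rpow_mul (hσ : 1 ≤ σ) (hf : IntervalIntegrable f volume 0 t) :
    IntervalIntegrable (fun s => (t - s) ^ (σ - 1) * f s) volume 0 t :=
  hf.continuousOn_mul
    ((continuous_sub_left t).rpow_const fun _ => Or.inr (sub_nonneg.2 hσ)).continuousOn

lemma rlInt_sub (hσ : 1 ≤ σ) (hf : IntervalIntegrable f volume 0 t)
    (hg : IntervalIntegrable g volume 0 t) :
    rlInt σ (fun s => f s - g s) t = rlInt σ f t - rlInt σ g t := by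
  simp only [rlInt, mul_sub]
  rw [intervalIntegral.integral_sub (intervalIntegrable_sub_rpow_mul hσ hf)
    (intervalIntegrable_sub_rpow_mul hσ hg), mul_sub]

lemma rlInt_mono (hσ : 1 ≤ σ) (ht : 0 ≤ t) (hf : IntervalIntegrable f volume 0 t)
    (hg : IntervalIntegrable g volume 0 t)
    (hfg : ∀ᵐ s ∂volume.restrict (Set.Icc 0 t), f s ≤ g s) : rlInt σ f t ≤ rlInt σ g t := by
  have := Real.Gamma_pos_of_pos (show 0 < σ by linarith)
  refine mul_le_mul_of_nonneg_left (intervalIntegral.integral_mono_ae_restrict ht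
    (intervalIntegrable_sub_rpow_mul hσ hf) (intervalIntegrable_sub_rpow_mul hσ hg) ?_)
    (by positivity)
  filter_upwards [hfg, ae_restrict_mem measurableSet_Icc] with s hs hst
  exact mul_le_mul_of_nonneg_left hs (Real.rpow_nonneg (sub_nonneg.2 hst.2) _)

lemma abs_rlInt_le (hσ : 0 < σ) (ht : 0 ≤ t) :
    |rlInt σ f t| ≤ rlInt σ (fun s => |f s|) t := by
  have := Real.Gamma_pos_of_pos hσ
  rw [rlInt, abs_mul, abs_of_pos (by positivity)]
  refine mul_le_mul_of_nonneg_left ((intervalIntegral.abs_integral_le_integral_abs ht).trans_eq ?_)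
    (by positivity)
  refine intervalIntegral.integral_congr fun s hs => ?_
  rw [Set.uIcc_of_le ht] at hs
  simp only [abs_mul, abs_of_nonneg (Real.rpow_nonneg (sub_nonneg.2 hs.2) _)]

lemma rlInt_add_one_le (hσ : 1 ≤ σ) (ht : 0 ≤ t) (hf : IntervalIntegrable f volume 0 t)
    (hf₀ : ∀ᵐ s ∂volume.restrict (Set.Icc 0 t), 0 ≤ f s) :
    rlInt (σ + 1) f t ≤ t / σ * rlInt σ f t := by
  have hσ₀ : 0 < σ := by linarith
  have := Real.Gamma_pos_of_pos hσ₀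
  have hint : ∫ s in (0 : ℝ)..t, (t - s) ^ (σ + 1 - 1) * f s
      ≤ t * ∫ s in (0 : ℝ)..t, (t - s) ^ (σ - 1) * f s := by
    rw [← intervalIntegral.integral_const_mul]
    refine intervalIntegral.integral_mono_ae_restrict ht
      (intervalIntegrable_sub_rpow_mul (by linarith) hf)
      ((intervalIntegrable_sub_rpow_mul hσ hf).const_mul t) ?_
    filter_upwards [hf₀, ae_restrict_mem measurableSet_Icc] with s hs hst
    have hts : 0 ≤ t - s := sub_nonneg.2 hst.2
    rw [show σ + 1 - 1 = 1 + (σ - 1) by ring, Real.rpow_one_add' hts (by linarith), mul_assoc]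
    exact mul_le_mul_of_nonneg_right (by linarith [hst.1]) (by positivity)
  calc rlInt (σ + 1) f t
      = 1 / (σ * Real.Gamma σ) * ∫ s in (0 : ℝ)..t, (t - s) ^ (σ + 1 - 1) * f s := by
        rw [rlInt, Real.Gamma_add_one hσ₀.ne']
    _ ≤ 1 / (σ * Real.Gamma σ) * (t * ∫ s in (0 : ℝ)..t, (t - s) ^ (σ - 1) * f s) := by
        gcongr
    _ = t / σ * rlInt σ f t := by
        rw [rlInt]
        field_simp

end Order

/-! ### The Caputo derivative -/

lemma isBigO_rlInt {σ β : ℝ} {v : ℝ → ℝ} (hσ : 0 < σ) (hβ : 0 ≤ β)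
    (hv : v =O[nhdsWithin 0 (Set.Ioi 0)] fun t => t ^ β) :
    rlInt σ v =O[nhdsWithin 0 (Set.Ioi 0)] fun t => t ^ (β + σ) := by
  obtain ⟨C, hC, hvC⟩ := hv.exists_pos
  obtain ⟨δ, hδ, hball⟩ := mem_nhdsGT_iff_exists_Ioo_subset.1 hvC.bound
  have := Real.Gamma_pos_of_pos hσ
  refine Asymptotics.IsBigO.of_bound (1 / Real.Gamma σ * (C / σ)) ?_
  filter_upwards [Ioo_mem_nhdsGT hδ] with t ht
  have ht₀ : 0 < t := ht.1
  have hbound : ∀ s ∈ Set.Ioc 0 t, ‖(t - s) ^ (σ - 1) * v s‖ ≤ C * t ^ β * (t - s) ^ (σ - 1) := by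
    intro s hs
    have hs₀ : 0 < s := hs.1
    have hts := Real.rpow_nonneg (sub_nonneg.2 hs.2) (σ - 1)
    have hvs : ‖v s‖ ≤ C * t ^ β := by
      refine (hball ⟨hs.1, hs.2.trans_lt ht.2⟩).trans ?_
      rw [Real.norm_of_nonneg (by positivity)]
      gcongr
      exact hs.2
    rw [norm_mul, Real.norm_of_nonneg hts, mul_comm]
    gcongr
  have hint := intervalIntegral.norm_integral_le_of_norm_le ht₀.le (ae_of_all _ hbound)
    ((intervalIntegrable_sub_rpow t (by linarith)).const_mul (C * t ^ β))
  rw [intervalIntegral.integral_const_mul, integral_sub_rpow t (by linarith), sub_add_cancel]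
    at hint
  calc ‖rlInt σ v t‖
      = 1 / Real.Gamma σ * ‖∫ s in (0 : ℝ)..t, (t - s) ^ (σ - 1) * v s‖ := by
        rw [rlInt, norm_mul, Real.norm_of_nonneg (by positivity)]
    _ ≤ 1 / Real.Gamma σ * (C * t ^ β * (t ^ σ / σ)) := by gcongr
    _ = 1 / Real.Gamma σ * (C / σ) * ‖t ^ (β + σ)‖ := by
        rw [Real.norm_of_nonneg (by positivity), Real.rpow_add ht₀]
        ring

lemma rlInt_zero_right (σ : ℝ) (f : ℝ → ℝ) : rlInt σ f 0 = 0 := by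
  simp [rlInt]

lemma deriv_rlInt_zero {σ : ℝ} {v : ℝ → ℝ} (hσ : 0 < σ)
    (hv : v =O[nhdsWithin 0 (Set.Ioi 0)] fun t => t)
    (hd : DifferentiableAt ℝ (rlInt σ v) 0) : deriv (rlInt σ v) 0 = 0 := by
  have hlittle : (fun t : ℝ => t ^ (1 + σ)) =o[nhdsWithin 0 (Set.Ioi 0)] fun t => t := by
    refine (Asymptotics.isLittleO_iff_tendsto' ?_).2 ?_
    · filter_upwards [self_mem_nhdsWithin] with t ht h
      exact absurd h (ne_of_gt ht)
    · have hlim : Tendsto (fun t : ℝ => t ^ σ) (nhdsWithin 0 (Set.Ioi 0)) (nhds 0) := by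
        have := (Real.continuousAt_rpow_const 0 σ (Or.inr hσ.le)).tendsto
        rw [Real.zero_rpow hσ.ne'] at this
        exact this.mono_left nhdsWithin_le_nhds
      refine hlim.congr' ?_
      filter_upwards [self_mem_nhdsWithin] with t (ht : 0 < t)
      rw [Real.rpow_one_add' ht.le (by linarith), mul_div_cancel_left₀ _ ht.ne']
  have hright : HasDerivWithinAt (rlInt σ v) 0 (Set.Ioi 0) 0 := by
    rw [hasDerivWithinAt_iff_isLittleO]
    simpa [rlInt_zero_right] using
      (isBigO_rlInt hσ zero_le_one (by simpa using hv)).trans_isLittleO hlittle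
  exact (uniqueDiffWithinAt_Ioi 0).eq_deriv _ hd.hasDerivAt.hasDerivWithinAt hright

lemma AC2On.sub_taylor_eq_rlInt {g : ℝ → ℝ} {T t : ℝ} (hg : AC2On g T) (ht : t ∈ Set.Icc 0 T) :
    g t - deriv g 0 * t - g 0 = rlInt 2 (deriv (deriv g)) t := by
  obtain ⟨hdiff, hint, hderiv⟩ := hg
  have hsub : Set.uIcc 0 t ⊆ Set.uIcc 0 T := by
    rw [Set.uIcc_of_le ht.1, Set.uIcc_of_le (ht.1.trans ht.2)]
    exact Set.Icc_subset_Icc_right ht.2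
  have hintt := hint.mono_set hsub
  have hderiv' : ∀ s ∈ Set.uIcc 0 t, deriv g s - deriv g 0 = rlInt 1 (deriv (deriv g)) s := by
    intro s hs
    rw [Set.uIcc_of_le ht.1] at hs
    rw [hderiv s ⟨hs.1, hs.2.trans ht.2⟩, rlInt_one, add_sub_cancel_left]
  have hderivint := intervalIntegrable_rlInt one_pos ht.1 hintt
  calc g t - deriv g 0 * t - g 0
      = ∫ s in (0 : ℝ)..t, (deriv g s - deriv g 0) := by
        rw [intervalIntegral.integral_eq_sub_of_hasDerivAt (f := fun s => g s - deriv g 0 * s)]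
        · ring
        · intro s hs
          rw [Set.uIcc_of_le ht.1] at hs
          simpa using (hdiff s ⟨hs.1, hs.2.trans ht.2⟩).hasDerivAt.fun_sub
            ((hasDerivAt_id s).const_mul (deriv g 0))
        · exact hderivint.congr fun s hs => (hderiv' s (Set.uIoc_subset_uIcc hs)).symm
    _ = rlInt 1 (rlInt 1 (deriv (deriv g))) t := by
        rw [rlInt_one]
        exact intervalIntegral.integral_congr hderiv'
    _ = rlInt 2 (deriv (deriv g)) t := by
        rw [rlInt_rlInt one_pos le_rfl ht.1 hintt, one_add_one_eq_two]

/-- The remainder of `w` after its first-order Taylor polynomial at `0`. -/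
noncomputable def taylorRem (w : ℝ → ℝ) (s : ℝ) : ℝ := w s - deriv w 0 * s - w 0

lemma isBigO_taylorRem {w : ℝ → ℝ} (hw : DifferentiableAt ℝ w 0) :
    taylorRem w =O[nhdsWithin 0 (Set.Ioi 0)] fun t => t := by
  have h : HasDerivAt (taylorRem w) 0 0 := by
    unfold taylorRem
    simpa using
      (hw.hasDerivAt.fun_sub ((hasDerivAt_id (0 : ℝ)).const_mul (deriv w 0))).sub_const (w 0)
  simpa [show taylorRem w 0 = 0 by simp [taylorRem]] using h.isBigO_sub.mono nhdsWithin_le_nhds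

-- The function under the Caputo derivative is `O(t^(3 - α))` at `0`, so it equals its own Taylor
-- remainder.
lemma rlInt_two_caputoD {α T t : ℝ} {w : ℝ → ℝ} (hα : α < 2) (hw : DifferentiableAt ℝ w 0)
    (hac : AC2On (capKernel α w) T) (ht : t ∈ Set.Icc 0 T) :
    rlInt 2 (caputoD α w) t = rlInt (2 - α) (taylorRem w) t := by
  have hcap : capKernel α w = rlInt (2 - α) (taylorRem w) := if_neg hα.ne
  have hd := hac.1 0 ⟨le_rfl, ht.1.trans ht.2⟩
  rw [caputoD, ← hac.sub_taylor_eq_rlInt ht]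
  rw [hcap] at hd ⊢
  rw [deriv_rlInt_zero (sub_pos.2 hα) (isBigO_taylorRem hw) hd, rlInt_zero_right]
  ring

lemma rlInt_caputoD {α σ T : ℝ} {w : ℝ → ℝ} (hα : α ≤ 2) (hσ : 3 ≤ σ) (hT : 0 ≤ T)
    (hwc : ContinuousOn w (Set.Icc 0 T)) (hw : DifferentiableAt ℝ w 0)
    (hac : AC2On (capKernel α w) T) :
    rlInt σ (caputoD α w) T = rlInt (σ - α) (taylorRem w) T := by
  have hrem : IntervalIntegrable (taylorRem w) volume 0 T := by
    refine ContinuousOn.intervalIntegrable ?_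
    rw [Set.uIcc_of_le hT]
    unfold taylorRem
    fun_prop
  have hcaputo : IntervalIntegrable (caputoD α w) volume 0 T := hac.2.1
  have hsplit : rlInt (σ - 2) (rlInt 2 (caputoD α w)) T = rlInt σ (caputoD α w) T := by
    rw [rlInt_rlInt two_pos (by linarith) hT hcaputo, sub_add_cancel]
  rw [← hsplit]
  rcases hα.eq_or_lt with rfl | hα
  · refine rlInt_congr hT fun t ht => ?_
    have hcap : capKernel 2 w = w := if_pos rfl
    rw [caputoD, ← hac.sub_taylor_eq_rlInt ht, hcap, taylorRem]
  · rw [rlInt_congr hT fun t ht => rlInt_two_caputoD hα hw hac ht,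
      rlInt_rlInt (sub_pos.2 hα) (by linarith) hT hrem, sub_add_sub_cancel]

lemma rlInt_taylorRem {σ T : ℝ} {w : ℝ → ℝ} (hσ : 1 ≤ σ) (hT : 0 < T)
    (hw : IntervalIntegrable w volume 0 T) :
    rlInt σ (taylorRem w) T = rlInt σ w T - deriv w 0 * (T ^ (σ + 1) / Real.Gamma (σ + 2))
      - w 0 * (T ^ σ / Real.Gamma (σ + 1)) := by
  have hlin : IntervalIntegrable (fun s => deriv w 0 * s) volume 0 T :=
    intervalIntegral.intervalIntegrable_id.const_mul _
  have hσ₀ : 0 < σ := by linarith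
  calc rlInt σ (taylorRem w) T
      = rlInt σ w T - rlInt σ (fun s => deriv w 0 * s) T - rlInt σ (fun _ => w 0 * 1) T := by
        rw [← rlInt_sub hσ hw hlin, ← rlInt_sub hσ (hw.sub hlin) intervalIntegrable_const]
        simp only [mul_one]
        rfl
    _ = _ := by
        rw [rlInt_const_mul, rlInt_const_mul, rlInt_id hσ₀ hT, rlInt_const_one hσ₀ hT]

/-! ### The test function -/

/-- The pairing of `f` on `[0, T]` with the test function
`(T - s)^(σ - 1) / Γ(σ) - (κ / T) (T - s)^σ / Γ(σ + 1)`, which is nonnegative for `κ ≤ σ`. -/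
noncomputable def testPairing (κ σ : ℝ) (f : ℝ → ℝ) (T : ℝ) : ℝ :=
  rlInt σ f T - κ / T * rlInt (σ + 1) f T

section TestPairing

variable {κ σ T : ℝ} {f g : ℝ → ℝ}

lemma testPairing_const_mul (κ σ c : ℝ) (f : ℝ → ℝ) (T : ℝ) :
    testPairing κ σ (fun s => c * f s) T = c * testPairing κ σ f T := by
  simp only [testPairing, rlInt_const_mul]
  ring

lemma testPairing_sub (hσ : 1 ≤ σ) (hf : IntervalIntegrable f volume 0 T)
    (hg : IntervalIntegrable g volume 0 T) :
    testPairing κ σ (fun s => f s - g s) T = testPairing κ σ f T - testPairing κ σ g T := by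
  simp only [testPairing, rlInt_sub hσ hf hg,
    rlInt_sub (show 1 ≤ σ + 1 by linarith) hf hg]
  ring

lemma testPairing_rlInt {γ : ℝ} (hγ : 0 < γ) (hσ : 1 ≤ σ) (hT : 0 ≤ T)
    (hf : IntervalIntegrable f volume 0 T) :
    testPairing κ σ (rlInt γ f) T = testPairing κ (σ + γ) f T := by
  rw [testPairing, testPairing, rlInt_rlInt hγ hσ hT hf, rlInt_rlInt hγ (by linarith) hT hf,
    add_right_comm]

lemma testPairing_caputoD {α : ℝ} {w : ℝ → ℝ} (hα : α ≤ 2) (hσ : 3 ≤ σ) (hT : 0 ≤ T)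
    (hwc : ContinuousOn w (Set.Icc 0 T)) (hw : DifferentiableAt ℝ w 0)
    (hac : AC2On (capKernel α w) T) :
    testPairing κ σ (caputoD α w) T = testPairing κ (σ - α) (taylorRem w) T := by
  rw [testPairing, testPairing, rlInt_caputoD hα hσ hT hwc hw hac,
    rlInt_caputoD hα (by linarith) hT hwc hw hac, sub_add_eq_add_sub]

lemma mul_rlInt_le_testPairing (hκ : 0 ≤ κ) (hσ : 1 ≤ σ) (hT : 0 < T)
    (hf : IntervalIntegrable f volume 0 T)
    (hf₀ : ∀ᵐ s ∂volume.restrict (Set.Icc 0 T), 0 ≤ f s) :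
    (1 - κ / σ) * rlInt σ f T ≤ testPairing κ σ f T := by
  have h := mul_le_mul_of_nonneg_left (rlInt_add_one_le hσ hT.le hf hf₀)
    (div_nonneg hκ hT.le)
  have hcancel : κ / T * (T / σ * rlInt σ f T) = κ / σ * rlInt σ f T := by
    field_simp
  rw [testPairing]
  linarith

lemma testPairing_mono (hκ : 0 ≤ κ) (hκσ : κ ≤ σ) (hσ : 1 ≤ σ) (hT : 0 < T)
    (hf : IntervalIntegrable f volume 0 T) (hg : IntervalIntegrable g volume 0 T)
    (hfg : ∀ᵐ s ∂volume.restrict (Set.Icc 0 T), f s ≤ g s) :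
    testPairing κ σ f T ≤ testPairing κ σ g T := by
  have hlower := mul_rlInt_le_testPairing hκ hσ hT (hg.sub hf) (hfg.mono fun s => sub_nonneg.2)
  have hweight : 0 ≤ 1 - κ / σ := sub_nonneg.2 (div_le_one_of_le₀ hκσ (by linarith))
  have hrl := rlInt_mono hσ hT.le hf hg hfg
  rw [rlInt_sub hσ hg hf, testPairing_sub hσ hg hf] at hlower
  linarith [mul_nonneg hweight (sub_nonneg.2 hrl)]

lemma abs_testPairing_le (hκ : 0 ≤ κ) (hσ : 1 ≤ σ) (hT : 0 < T)
    (hf : IntervalIntegrable f volume 0 T) :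
    |testPairing κ σ f T| ≤ (1 + κ / σ) * rlInt σ (fun s => |f s|) T := by
  calc |testPairing κ σ f T|
      ≤ |rlInt σ f T| + κ / T * |rlInt (σ + 1) f T| := by
        rw [testPairing, ← abs_of_nonneg (div_nonneg hκ hT.le), ← abs_mul,
          abs_of_nonneg (div_nonneg hκ hT.le)]
        exact abs_sub _ _
    _ ≤ rlInt σ (fun s => |f s|) T + κ / T * (T / σ * rlInt σ (fun s => |f s|) T) := by
        gcongr
        · exact abs_rlInt_le (by linarith) hT.le
        · exact (abs_rlInt_le (by linarith) hT.le).trans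
            (rlInt_add_one_le hσ hT.le hf.abs (ae_of_all _ fun s => abs_nonneg _))
    _ = (1 + κ / σ) * rlInt σ (fun s => |f s|) T := by
        field_simp

lemma testPairing_le_of_caputo_ineq {α γ a b : ℝ} {w : ℝ → ℝ} (hγ : 0 < γ) (hα : α ≤ 2)
    (hσ : 3 ≤ σ) (hκ : 0 ≤ κ) (hκσ : κ ≤ σ) (hT : 0 < T)
    (hwc : ContinuousOn w (Set.Icc 0 T)) (hw : DifferentiableAt ℝ w 0)
    (hac : AC2On (capKernel α w) T) (hf : IntervalIntegrable f volume 0 T)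
    (hineq : ∀ᵐ t ∂volume.restrict (Set.Icc 0 T), caputoD α w t + a * w t ≥ b * rlInt γ f t) :
    b * testPairing κ (σ + γ) f T - a * testPairing κ σ w T
      ≤ testPairing κ (σ - α) (taylorRem w) T := by
  have hσ₁ : 1 ≤ σ := by linarith
  have hrl := (intervalIntegrable_rlInt hγ hT.le hf).const_mul b
  have haw := (hwc.intervalIntegrable_of_Icc (μ := volume) hT.le).const_mul a
  rw [← testPairing_rlInt hγ hσ₁ hT.le hf, ← testPairing_const_mul, ← testPairing_const_mul,
    ← testPairing_sub hσ₁ hrl haw, ← testPairing_caputoD hα hσ hT.le hwc hw hac]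
  exact testPairing_mono hκ hκσ hσ₁ hT (hrl.sub haw) hac.2.1
    (hineq.mono fun t ht => sub_le_iff_le_add.2 ht)

end TestPairing

/-- The weight `κ` for which `testPairing κ n` gives `w 0` and `T * deriv w 0` equal coefficients
when it is applied to the first-order Taylor polynomial of `w`. -/
noncomputable def balancedWeight (n : ℝ) : ℝ := n * (n + 2) / (n + 1)

lemma balancedWeight_nonneg {n : ℝ} (hn : 0 ≤ n) : 0 ≤ balancedWeight n := by
  unfold balancedWeight
  positivity

lemma balancedWeight_le_add_one {n : ℝ} (hn : 0 ≤ n) : balancedWeight n ≤ n + 1 := by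
  rw [balancedWeight, div_le_iff₀ (by linarith)]
  linarith

lemma testPairing_balancedWeight_taylorRem {n T : ℝ} {w : ℝ → ℝ} (hn : 1 ≤ n) (hT : 0 < T)
    (hw : IntervalIntegrable w volume 0 T) :
    testPairing (balancedWeight n) n (taylorRem w) T
      = testPairing (balancedWeight n) n w T
        - T ^ n / ((n + 1) * Real.Gamma (n + 2)) * (T * deriv w 0 + w 0) := by
  have hn₁ : n + 1 ≠ 0 := by linarith
  have hn₂ : n + 2 ≠ 0 := by linarith
  have hΓ := (Real.Gamma_pos_of_pos (show 0 < n + 1 by linarith)).ne'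
  have hΓ₂ : Real.Gamma (n + 2) = (n + 1) * Real.Gamma (n + 1) := by
    rw [← Real.Gamma_add_one hn₁, add_assoc, one_add_one_eq_two]
  have hΓ₃ : Real.Gamma (n + 1 + 2) = (n + 2) * ((n + 1) * Real.Gamma (n + 1)) := by
    rw [← hΓ₂, ← Real.Gamma_add_one hn₂, add_right_comm]
  rw [testPairing, testPairing, rlInt_taylorRem hn hT hw, rlInt_taylorRem (by linarith) hT hw,
    show n + 1 + 1 = n + 2 by ring, hΓ₃, hΓ₂, Real.rpow_add_one hT.ne', balancedWeight,
    Real.rpow_add hT n 2, Real.rpow_two]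
  field_simp
  ring

/-! ### Absorption of the linear terms -/

lemma exists_mul_le_mul_rpow_add {p ε : ℝ} (A : ℝ) (hp : 1 < p) (hε : 0 < ε) :
    ∃ K > 0, ∀ x, 0 ≤ x → A * x ≤ ε * x ^ p + K := by
  have hp₀ : 0 < p - 1 := sub_pos.2 hp
  set M : ℝ := (|A| / ε) ^ (1 / (p - 1)) with hM
  have : 0 ≤ M := by positivity
  refine ⟨|A| * M + 1, by positivity, fun x hx => ?_⟩
  have hAx : A * x ≤ |A| * x := mul_le_mul_of_nonneg_right (le_abs_self A) hx
  rcases le_total x M with hxM | hMx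
  · have := mul_le_mul_of_nonneg_left hxM (abs_nonneg A)
    have : 0 ≤ ε * x ^ p := by positivity
    linarith
  · have hMp : M ^ (p - 1) = |A| / ε := by
      rw [hM, ← Real.rpow_mul (by positivity), one_div_mul_cancel hp₀.ne', Real.rpow_one]
    have hlarge : |A| ≤ ε * x ^ (p - 1) := by
      rw [← div_le_iff₀' hε, ← hMp]
      gcongr
    have hsplit : x ^ p = x ^ (p - 1) * x := by
      rw [← Real.rpow_add_one' hx (by linarith), sub_add_cancel]
    rw [hsplit]
    have := mul_le_mul_of_nonneg_right hlarge hx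
    have : 0 ≤ |A| * M := by positivity
    linarith

-- Reduces to `exists_mul_le_mul_rpow_add` by the scaling `y ↦ x^((s - r) / (p - 1)) y`.
lemma exists_mul_rpow_mul_le {p ε : ℝ} (A r s : ℝ) (hp : 1 < p) (hε : 0 < ε) :
    ∃ K > 0, ∀ x y, 0 < x → 0 ≤ y →
      A * (x ^ r * y) ≤ ε * (x ^ s * y ^ p) + K * x ^ (r - (s - r) / (p - 1)) := by
  obtain ⟨K, hK, hAK⟩ := exists_mul_le_mul_rpow_add A hp hε
  refine ⟨K, hK, fun x y hx hy => ?_⟩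
  have hp₀ : p - 1 ≠ 0 := (sub_pos.2 hp).ne'
  set θ := r - (s - r) / (p - 1) with hθ
  have hscaled := mul_le_mul_of_nonneg_left (hAK (x ^ ((s - r) / (p - 1)) * y) (by positivity))
    (Real.rpow_nonneg hx.le θ)
  have hlin : x ^ r = x ^ θ * x ^ ((s - r) / (p - 1)) := by
    rw [← Real.rpow_add hx, hθ, sub_add_cancel]
  have hpow : x ^ s = x ^ θ * (x ^ ((s - r) / (p - 1))) ^ p := by
    rw [← Real.rpow_mul hx.le, ← Real.rpow_add hx, hθ]
    congr 1
    field_simp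
    ring
  rw [Real.mul_rpow (by positivity) hy] at hscaled
  rw [hlin, hpow]
  linarith

lemma exists_mul_rlInt_abs_le {p ε r s : ℝ} (A : ℝ) (hp : 1 < p) (hε : 0 < ε) (hr : 1 ≤ r)
    (hs : 1 ≤ s) (hrs : 0 < r - (s - r) / (p - 1)) :
    ∃ K > 0, ∀ T > 0, ∀ f : ℝ → ℝ, IntervalIntegrable f volume 0 T →
      IntervalIntegrable (fun t => |f t| ^ p) volume 0 T →
      A * rlInt r (fun t => |f t|) T
        ≤ ε * rlInt s (fun t => |f t| ^ p) T + K * T ^ (r - (s - r) / (p - 1)) := by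
  have := Real.Gamma_pos_of_pos (show 0 < r by linarith)
  have := Real.Gamma_pos_of_pos (show 0 < s by linarith)
  obtain ⟨K, hK, hyoung⟩ := exists_mul_rpow_mul_le (A / Real.Gamma r) (r - 1) (s - 1) hp
    (show 0 < ε / Real.Gamma s by positivity)
  set θ := r - (s - r) / (p - 1)
  have hexp : r - 1 - (s - 1 - (r - 1)) / (p - 1) = θ - 1 := by ring
  rw [hexp] at hyoung
  refine ⟨K / θ, by positivity, fun T hT f hf hfp => ?_⟩
  have hi₁ := (intervalIntegrable_sub_rpow_mul hr hf.abs).const_mul (A / Real.Gamma r)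
  have hi₂ := (intervalIntegrable_sub_rpow_mul hs hfp).const_mul (ε / Real.Gamma s)
  have hi₃ := (intervalIntegrable_sub_rpow T (show -1 < θ - 1 by linarith)).const_mul K
  have hmono := intervalIntegral.integral_mono_on_of_le_Ioo hT.le hi₁ (hi₂.add hi₃)
    fun t ht => hyoung (T - t) |f t| (sub_pos.2 ht.2) (abs_nonneg _)
  rw [intervalIntegral.integral_add hi₂ hi₃, intervalIntegral.integral_const_mul,
    intervalIntegral.integral_const_mul, intervalIntegral.integral_const_mul,
    integral_sub_rpow T (by linarith), sub_add_cancel] at hmono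
  calc A * rlInt r (fun t => |f t|) T
      = A / Real.Gamma r * ∫ t in (0 : ℝ)..T, (T - t) ^ (r - 1) * |f t| := by
        rw [rlInt]
        ring
    _ ≤ _ := hmono
    _ = ε * rlInt s (fun t => |f t| ^ p) T + K / θ * T ^ θ := by
        rw [rlInt]
        ring

lemma exists_add_mul_rlInt_abs_le {α γ p n ε : ℝ} (A B : ℝ) (hα : 0 ≤ α) (hγ : 0 ≤ γ)
    (hp : 1 < p) (hn : 1 ≤ n) (hnp : (α + γ) / (p - 1) < n) (hε : 0 < ε) :
    ∃ K₁ > 0, ∃ K₂ > 0, ∀ T > 0, ∀ f : ℝ → ℝ, IntervalIntegrable f volume 0 T →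
      IntervalIntegrable (fun t => |f t| ^ p) volume 0 T →
      A * rlInt (n + α) (fun t => |f t|) T + B * rlInt n (fun t => |f t|) T
        ≤ ε * rlInt (n + α + γ) (fun t => |f t| ^ p) T
          + T ^ n * (K₁ * T ^ (α + γ - p * γ / (p - 1)) + K₂ * T ^ (-(α + γ) / (p - 1))) := by
  have hp₀ : 0 < p - 1 := sub_pos.2 hp
  have hexp₁ : n + α - (n + α + γ - (n + α)) / (p - 1) = n + (α + γ - p * γ / (p - 1)) := by
    field_simp
    ring
  have hexp₂ : n - (n + α + γ - n) / (p - 1) = n + -(α + γ) / (p - 1) := by ring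
  have hpos₁ : 0 < n + α - (n + α + γ - (n + α)) / (p - 1) := by
    have : γ / (p - 1) ≤ (α + γ) / (p - 1) := by
      gcongr
      linarith
    rw [add_sub_cancel_left]
    linarith
  have hpos₂ : 0 < n - (n + α + γ - n) / (p - 1) := by
    rwa [add_assoc, add_sub_cancel_left, sub_pos]
  obtain ⟨K₁, hK₁, hyoung₁⟩ := exists_mul_rlInt_abs_le A hp (half_pos hε)
    (show 1 ≤ n + α by linarith) (show 1 ≤ n + α + γ by linarith) hpos₁
  obtain ⟨K₂, hK₂, hyoung₂⟩ := exists_mul_rlInt_abs_le B hp (half_pos hε)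
    hn (show 1 ≤ n + α + γ by linarith) hpos₂
  refine ⟨K₁, hK₁, K₂, hK₂, fun T hT f hf hfp => ?_⟩
  have hbound₁ := hyoung₁ T hT f hf hfp
  have hbound₂ := hyoung₂ T hT f hf hfp
  rw [hexp₁, Real.rpow_add hT] at hbound₁
  rw [hexp₂, Real.rpow_add hT] at hbound₂
  linarith

lemma mul_taylor_le_rlInt {α γ p a b n T : ℝ} {w : ℝ → ℝ} (hγ : 0 < γ) (hα₁ : 1 ≤ α)
    (hα₂ : α ≤ 2) (hp : 0 < p) (hb : 0 ≤ b) (hn : 2 ≤ n) (hT : 0 < T)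
    (hwc : ContinuousOn w (Set.Icc 0 T)) (hw : DifferentiableAt ℝ w 0)
    (hac : AC2On (capKernel α w) T)
    (hineq : ∀ᵐ t ∂volume.restrict (Set.Icc 0 T),
      caputoD α w t + a * w t ≥ b * rlInt γ (fun s => |w s| ^ p) t) :
    T ^ n / ((n + 1) * Real.Gamma (n + 2)) * (T * deriv w 0 + w 0)
      ≤ (1 + balancedWeight n / n) * rlInt n (fun s => |w s|) T
        + |a| * (1 + balancedWeight n / (n + α)) * rlInt (n + α) (fun s => |w s|) T
        - b * (1 - balancedWeight n / (n + α + γ))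
          * rlInt (n + α + γ) (fun s => |w s| ^ p) T := by
  have hn₁ : 1 ≤ n := by linarith
  have hκ := balancedWeight_nonneg (show 0 ≤ n by linarith)
  have hκn := balancedWeight_le_add_one (show 0 ≤ n by linarith)
  have hwi := hwc.intervalIntegrable_of_Icc (μ := volume) hT.le
  have hwp : IntervalIntegrable (fun s => |w s| ^ p) volume 0 T :=
    (hwc.abs.rpow_const fun _ _ => Or.inr hp.le).intervalIntegrable_of_Icc hT.le
  have htested := testPairing_le_of_caputo_ineq (σ := n + α) hγ hα₂ (by linarith) hκ (by linarith)
    hT hwc hw hac hwp hineq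
  rw [add_sub_cancel_right, testPairing_balancedWeight_taylorRem hn₁ hT hwi] at htested
  have hlinear := (le_abs_self _).trans (abs_testPairing_le hκ hn₁ hT hwi)
  have hzeroth : a * testPairing (balancedWeight n) (n + α) w T
      ≤ |a| * ((1 + balancedWeight n / (n + α)) * rlInt (n + α) (fun s => |w s|) T) := by
    refine (le_abs_self _).trans ?_
    rw [abs_mul]
    exact mul_le_mul_of_nonneg_left (abs_testPairing_le hκ (by linarith) hT hwi) (abs_nonneg a)
  have hpower := mul_le_mul_of_nonneg_left (mul_rlInt_le_testPairing hκ
    (show 1 ≤ n + α + γ by linarith) hT hwp (ae_of_all _ fun s => by positivity)) hb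
  linarith

theorem apriori_bound_ineq_general
    (γ α p a b : ℝ) (hγ : 0 < γ) (hα1 : 1 < α) (hα2 : α ≤ 2) (hp : 1 < p) (hb : 0 < b) :
    ∃ K₁ > (0 : ℝ), ∃ K₂ > (0 : ℝ), ∀ T > (0 : ℝ), ∀ w : ℝ → ℝ,
      ContinuousOn w (Set.Icc 0 T) →
      DifferentiableAt ℝ w 0 →
      AC2On (capKernel α w) T →
      (∀ᵐ t ∂(volume.restrict (Set.Icc (0 : ℝ) T)),
        caputoD α w t + a * w t ≥ b * rlInt γ (fun s => |w s| ^ p) t) →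
      T * deriv w 0 + w 0
        ≤ K₁ * T ^ (α + γ - p * γ / (p - 1)) + K₂ * T ^ (-(α + γ) / (p - 1)) := by
  have hp₀ : 0 < p - 1 := sub_pos.2 hp
  set n := 2 + (α + γ) / (p - 1)
  have hn : 2 < n := lt_add_of_pos_right 2 (by positivity)
  have hδ : 0 < 1 - balancedWeight n / (n + α + γ) := by
    have := balancedWeight_le_add_one (show 0 ≤ n by linarith)
    rw [sub_pos, div_lt_one (by linarith)]
    linarith
  obtain ⟨K₁, hK₁, K₂, hK₂, habsorb⟩ := exists_add_mul_rlInt_abs_le (n := n)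
    (|a| * (1 + balancedWeight n / (n + α))) (1 + balancedWeight n / n)
    (show 0 ≤ α by linarith) hγ.le hp (by linarith) (lt_add_of_pos_left _ two_pos)
    (mul_pos hb hδ)
  set E := (n + 1) * Real.Gamma (n + 2)
  have hE : 0 < E := mul_pos (by linarith) (Real.Gamma_pos_of_pos (by linarith))
  refine ⟨E * K₁, by positivity, E * K₂, by positivity, fun T hT w hwc hw hac hineq => ?_⟩
  have hwi := hwc.intervalIntegrable_of_Icc (μ := volume) hT.le
  have hwp : IntervalIntegrable (fun s => |w s| ^ p) volume 0 T :=
    (hwc.abs.rpow_const fun _ _ => Or.inr (by linarith)).intervalIntegrable_of_Icc hT.le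
  have htaylor := mul_taylor_le_rlInt hγ hα1.le hα2 (by linarith) hb.le hn.le hT hwc hw hac hineq
  refine le_of_mul_le_mul_left ?_ (show 0 < T ^ n / E by positivity)
  calc T ^ n / E * (T * deriv w 0 + w 0)
      ≤ T ^ n * (K₁ * T ^ (α + γ - p * γ / (p - 1)) + K₂ * T ^ (-(α + γ) / (p - 1))) := by
        linarith [habsorb T hT w hwi hwp]
    _ = T ^ n / E * (E * K₁ * T ^ (α + γ - p * γ / (p - 1))
        + E * K₂ * T ^ (-(α + γ) / (p - 1))) := by field_simp

/-- Corollary 2.5 (i): a priori bound for solutions of the inequality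
`₀D_t^α w + a w ≥ b ₀I_t^γ |w|^p`, with `K₁, K₂` independent of `T`. -/
theorem apriori_bound_ineq
    (γ α p a b : ℝ) (hγ : 0 < γ) (hα1 : 1 < α) (hα2 : α < 2)
    (hp : 1 < p) (ha : 0 < a) (hb : 0 < b) :
    ∃ K₁ > (0:ℝ), ∃ K₂ > (0:ℝ), ∀ T > (0:ℝ), ∀ w : ℝ → ℝ,
      ContDiff ℝ 1 w →
      (∃ t ∈ Set.Icc (0:ℝ) T, w t ≠ 0) →
      AC2On (capKernel α w) T →
      (∀ᵐ t ∂(volume.restrict (Set.Icc (0:ℝ) T)),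
        caputoD α w t + a * w t ≥ b * rlInt γ (fun s => |w s| ^ p) t) →
      T * deriv w 0 + w 0
        ≤ K₁ * T ^ (α + γ - p * γ / (p - 1)) + K₂ * T ^ (-(α + γ) / (p - 1)) := by
  obtain ⟨K₁, hK₁, K₂, hK₂, hbound⟩ := apriori_bound_ineq_general γ α p a b hγ hα1 hα2.le hp hb
  exact ⟨K₁, hK₁, K₂, hK₂, fun T hT w hw _ =>
    hbound T hT w hw.continuous.continuousOn (hw.differentiable one_ne_zero 0)⟩
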